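/- Let Γ be a finite extensive-form game with perfect recall. A behavioral strategy profile β* is a subgame perfect equilibrium in behavioral strategies if and only if there exist a behavioral strategy profile β̃*, a belief system μ*, and multipliers λ*, λ̃*, ζ*, ζ̃* such that (β*, β̃*, μ*, λ*, λ̃*, ζ*, ζ̃*) solves the system: C^i_{I_i^j}(I_i^j|β) u^i(a, ϱ^i_{I_i^j}(β^{-I_i^j}, β̃), μ | I_i^j) + λ^i_{I_i^j}(a) − ζ^i_{I_i^j} = 0 and u^i(a, ϱ^i_{I_i^j}(β^{-I_i^j}, β̃), μ | I_i^j) + λ̃^i_{I_i^j}(a) − ζ̃^i_{I_i^j} = 0 for all i ∈ N, j ∈ M_i, a ∈ A(I_i^j); Y^i(I_i^j|β) μ^i_{I_i^j}(h) = Y^i(h|β) and μ^i_{I_i^j}(h) ≥ 0 for all i, j, h ∈ I_i^j; Σ_{h ∈ I_i^j} μ^i_{I_i^j}(h) = 1, Σ_{a ∈ A(I_i^j)} β^i_{I_i^j}(a) = 1, Σ_{a ∈ A(I_i^j)} β̃^i_{I_i^j}(a) = 1 for all i, j; β^i_{I_i^j}(a) λ^i_{I_i^j}(a) = 0, β̃^i_{I_i^j}(a)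 λ̃^i_{I_i^j}(a) = 0, and β^i_{I_i^j}(a) ≥ 0, λ^i_{I_i^j}(a) ≥ 0, β̃^i_{I_i^j}(a) ≥ 0, λ̃^i_{I_i^j}(a) ≥ 0 for all i, j, a ∈ A(I_i^j). -/

import Mathlib

open scoped Classical

noncomputable section

/-- A finite extensive-form game.  Actions are labelled by natural numbers drawn from the
finite pool `actFinset`; a history is the list of actions taken so far; players are `Fin n`
and `P h = none` means that the chance player moves after `h`.  The information sets of
player `i` are `Info i j` for `j < m i`, and `infoIdx h` is the index of the information
set containing a nonterminal history `h` at which some player moves.  Payoffs `u i h` are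
relevant on terminal histories. -/
structure EFG where
  n : ℕ
  actFinset : Finset ℕ
  H : Finset (List ℕ)
  P : List ℕ → Option (Fin n)
  fc : List ℕ → ℕ → ℝ
  m : Fin n → ℕ
  Info : Fin n → ℕ → Finset (List ℕ)
  infoIdx : List ℕ → ℕ
  u : Fin n → List ℕ → ℝ
  empty_mem : ([] : List ℕ) ∈ H
  prefixClosed : ∀ h ∈ H, ∀ h' : List ℕ, h' <+: h → h' ∈ H
  act_mem : ∀ (h : List ℕ) (a : ℕ), h ++ [a] ∈ H → a ∈ actFinset
  fc_nonneg : ∀ h a, 0 ≤ fc h a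
  fc_sum : ∀ h ∈ H, P h = none → (∃ a, h ++ [a] ∈ H) →
    ∑ a ∈ actFinset.filter (fun a => h ++ [a] ∈ H), fc h a = 1
  info_spec : ∀ (i : Fin n) (j : ℕ) (h : List ℕ), j < m i →
    (h ∈ Info i j ↔ h ∈ H ∧ P h = some i ∧ (∃ a, h ++ [a] ∈ H) ∧ infoIdx h = j)
  infoIdx_lt : ∀ (i : Fin n), ∀ h ∈ H, P h = some i → (∃ a, h ++ [a] ∈ H) → infoIdx h < m i
  info_nonempty : ∀ (i : Fin n) (j : ℕ), j < m i → (Info i j).Nonempty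
  info_actions : ∀ (i : Fin n) (j : ℕ), j < m i → ∀ h ∈ Info i j, ∀ h' ∈ Info i j,
    ∀ a : ℕ, (h ++ [a] ∈ H ↔ h' ++ [a] ∈ H)
  act_unique : ∀ (h h' : List ℕ) (a : ℕ), h ∈ H → h' ∈ H → h ++ [a] ∈ H → h' ++ [a] ∈ H →
    P h = P h' ∧ infoIdx h = infoIdx h'

namespace EFG

/-- Behavioral strategy profiles (player, information-set index, action ↦ probability). -/
abbrev Profile (G : EFG) : Type := Fin G.n → ℕ → ℕ → ℝ

/-- Belief systems (player, information-set index, history ↦ probability). -/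
abbrev Belief (G : EFG) : Type := Fin G.n → ℕ → List ℕ → ℝ

variable (G : EFG)

/-- The set `Z` of terminal histories. -/
def Zset : Finset (List ℕ) := G.H.filter fun h => ∀ a : ℕ, h ++ [a] ∉ G.H

/-- The set `A(h)` of actions available after a history. -/
def A (h : List ℕ) : Finset ℕ := G.actFinset.filter fun a => h ++ [a] ∈ G.H

/-- The common action set `A(I_i^j)` of an information set. -/
def infoA (i : Fin G.n) (j : ℕ) : Finset ℕ := (G.Info i j).sup fun h => G.A h

/-- A behavioral strategy of player `i`: a probability distribution on `A(I_i^j)` for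
each information set `I_i^j`. -/
def IsBehStrategy (i : Fin G.n) (b : ℕ → ℕ → ℝ) : Prop :=
  ∀ j < G.m i, (∀ a ∈ G.infoA i j, 0 ≤ b j a) ∧ ∑ a ∈ G.infoA i j, b j a = 1

/-- A behavioral strategy profile. -/
def IsBehProfile (β : G.Profile) : Prop := ∀ i : Fin G.n, G.IsBehStrategy i (β i)

/-- The probability of action `a` at history `h`: the chance distribution if the chance
player moves, and the mover's behavioral strategy otherwise. -/
def moveProb (β : G.Profile) (h : List ℕ) (a : ℕ) : ℝ :=
  (G.P h).elim (G.fc h a) fun i => β i (G.infoIdx h) a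

/-- Player `i`'s record `X_i` of the information sets he encounters along a history and the
actions he takes at them, accumulated starting from the prefix `pre`. -/
def recordFrom (i : Fin G.n) : List ℕ → List ℕ → List (ℕ × ℕ)
  | _, [] => []
  | pre, b :: rest =>
    (if G.P pre = some i then [(G.infoIdx pre, b)] else []) ++ recordFrom i (pre ++ [b]) rest

/-- Perfect recall. -/
def PerfectRecall : Prop :=
  ∀ (i : Fin G.n) (j : ℕ), j < G.m i →
    ∀ h ∈ G.Info i j, ∀ h' ∈ G.Info i j, G.recordFrom i [] h = G.recordFrom i [] h'

/-- Product of the move probabilities along `rest`, continuing from the prefix `pre`. -/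
def prodAlong (β : G.Profile) : List ℕ → List ℕ → ℝ
  | _, [] => 1
  | pre, b :: rest => G.moveProb β pre b * prodAlong β (pre ++ [b]) rest

/-- `ω(h|β)`: the probability that the moves along `h` are played under `β`. -/
def omega (β : G.Profile) (h : List ℕ) : ℝ := G.prodAlong β [] h

/-- `ω(I_i^j|β)`. -/
def omegaInfo (i : Fin G.n) (j : ℕ) (β : G.Profile) : ℝ := ∑ h ∈ G.Info i j, G.omega β h

/-- Product of the move probabilities along `rest` from `pre`, disregarding player `i`'s
own moves. -/
def prodAlongNot (i : Fin G.n) (β : G.Profile) : List ℕ → List ℕ → ℝ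
  | _, [] => 1
  | pre, b :: rest =>
    (if G.P pre = some i then 1 else G.moveProb β pre b) * prodAlongNot i β (pre ++ [b]) rest

/-- `S^i(h|β)`: probability of the moves along `h`, disregarding player `i`'s own moves. -/
def Sh (i : Fin G.n) (β : G.Profile) (h : List ℕ) : ℝ := G.prodAlongNot i β [] h

/-- `S^i(I_i^j|β)`. -/
def SInfo (i : Fin G.n) (j : ℕ) (β : G.Profile) : ℝ := ∑ h ∈ G.Info i j, G.Sh i β h

/-- Product of the move probabilities along `rest` from `pre`, with the factor at prefixes
lying in `I_i^j` omitted. -/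
def prodAlongSkip (i : Fin G.n) (j : ℕ) (β : G.Profile) : List ℕ → List ℕ → ℝ
  | _, [] => 1
  | pre, b :: rest =>
    (if pre ∈ G.Info i j then 1 else G.moveProb β pre b) * prodAlongSkip i j β (pre ++ [b]) rest

/-- `q ∈ M(a, I_i^j)`: `I_i^q` is a first information set of player `i` after action `a`
(every history in `I_i^q` contains `a`, with no later action of `a` lying in any action set
of player `i`). -/
def FirstAfter (i : Fin G.n) (a : ℕ) (q : ℕ) : Prop :=
  q < G.m i ∧ ∀ h ∈ G.Info i q, ∃ l₁ l₂ : List ℕ,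
    h = l₁ ++ a :: l₂ ∧ ∀ b ∈ l₂, ∀ p < G.m i, b ∉ G.infoA i p

/-- `q ∈ M(I_i^j) = ∪_{a ∈ A(I_i^j)} M(a, I_i^j)`. -/
def MInfo (i : Fin G.n) (j : ℕ) (q : ℕ) : Prop := ∃ a ∈ G.infoA i j, G.FirstAfter i a q

/-- `q ∈ Λ(a, I_i^j)`: every history in `I_i^q` contains the action `a`. -/
def LambdaSet (i : Fin G.n) (a : ℕ) (q : ℕ) : Prop :=
  q < G.m i ∧ ∀ h ∈ G.Info i q, ∃ l₁ l₂ : List ℕ, h = l₁ ++ a :: l₂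

/-- `ϱ^i_{I_i^j}(β, β̃)`: replace player `i`'s component of `β` by that of `β̃` at every
information set `I_i^q` such that some history in `I_i^q` contains an action of `A(I_i^j)`. -/
def rho (i : Fin G.n) (j : ℕ) (β βt : G.Profile) : G.Profile := fun p q =>
  if p = i ∧ ∃ h ∈ G.Info i q, ∃ b ∈ h, b ∈ G.infoA i j then βt i q else β p q

/-- A belief system: a probability distribution on each information set. -/
def IsBelief (μ : G.Belief) : Prop :=
  ∀ (i : Fin G.n) (j : ℕ), j < G.m i →
    (∀ h ∈ G.Info i j, 0 ≤ μ i j h) ∧ ∑ h ∈ G.Info i j, μ i j h = 1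

/-- A self-independent belief system for `β`:
`S^i(I_i^j|β) · μ^i_{I_i^j}(h) = S^i(h|β)`. -/
def SelfIndep (β : G.Profile) (μ : G.Belief) : Prop :=
  ∀ (i : Fin G.n) (j : ℕ), j < G.m i → ∀ h ∈ G.Info i j,
    G.SInfo i j β * μ i j h = G.Sh i β h

/-- Auxiliary for `ν`: scan `rest` from `pre` for the subhistory lying in `I_i^j`, then
weight by the belief and multiply the move probabilities of the remaining moves (the move
taken at the subhistory itself being skipped). -/
def nuAux (i : Fin G.n) (j : ℕ) (β : G.Profile) (w : List ℕ → ℝ) : List ℕ → List ℕ → ℝ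
  | _, [] => 0
  | pre, b :: rest =>
    if pre ∈ G.Info i j then w pre * G.prodAlong β (pre ++ [b]) rest
    else nuAux i j β w (pre ++ [b]) rest

/-- `ν^i_{I_i^j}(h | a, β^{-I_i^j}, μ)` (it does not involve the component of `β` at
`I_i^j`). -/
def nu (i : Fin G.n) (j : ℕ) (β : G.Profile) (μ : G.Belief) (h : List ℕ) : ℝ :=
  G.nuAux i j β (μ i j) [] h

/-- `u^i((a, β^{-I_i^j}) ∧ I_i^j)`. -/
def uWedgeAct (i : Fin G.n) (j : ℕ) (a : ℕ) (β : G.Profile) : ℝ :=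
  ∑ h ∈ G.Zset.filter (fun h => a ∈ h), G.u i h * G.prodAlongSkip i j β [] h

/-- `u^i(β ∧ I_i^j)`. -/
def uWedge (i : Fin G.n) (j : ℕ) (β : G.Profile) : ℝ :=
  ∑ h ∈ G.Zset.filter (fun h => ∃ b ∈ h, b ∈ G.infoA i j), G.u i h * G.omega β h

/-- The conditional expected payoff `u^i(a, β^{-I_i^j}, μ | I_i^j)`. -/
def uCond (i : Fin G.n) (j : ℕ) (a : ℕ) (β : G.Profile) (μ : G.Belief) : ℝ :=
  ∑ h ∈ G.Zset.filter (fun h => a ∈ h), G.u i h * G.nu i j β μ h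

/-- The expected payoff `u^i(β)`. -/
def uExp (i : Fin G.n) (β : G.Profile) : ℝ := ∑ h ∈ G.Zset, G.u i h * G.omega β h

/-- The profile obtained from `β` by replacing all of player `i`'s components by `b`. -/
def replace (β : G.Profile) (i : Fin G.n) (b : ℕ → ℕ → ℝ) : G.Profile :=
  fun p => if p = i then b else β p

/-- `β` is a Nash equilibrium in behavioral strategies. -/
def IsNash (β : G.Profile) : Prop :=
  G.IsBehProfile β ∧ ∀ (i : Fin G.n) (b : ℕ → ℕ → ℝ), G.IsBehStrategy i b →
    G.uExp i (G.replace β i b) ≤ G.uExp i β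

/-- `(β, β̃, μ)` satisfies the Nash characterization (Definition 2 of the paper). -/
def NashChar (β βt : G.Profile) (μ : G.Belief) : Prop :=
  (∀ (i : Fin G.n) (j : ℕ), j < G.m i → ∀ a' ∈ G.infoA i j, ∀ a'' ∈ G.infoA i j,
    G.uWedgeAct i j a' (G.rho i j β βt) < G.uWedgeAct i j a'' (G.rho i j β βt) →
    β i j a' = 0) ∧
  (∀ (i : Fin G.n) (j : ℕ), j < G.m i → ∀ a' ∈ G.infoA i j, ∀ a'' ∈ G.infoA i j,
    G.uCond i j a' (G.rho i j β βt) μ < G.uCond i j a'' (G.rho i j β βt) μ →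
    βt i j a' = 0) ∧
  G.IsBelief μ ∧ G.SelfIndep β μ

/-- `r` is the root of a subgame: every information set lies entirely inside or entirely
outside the set of histories extending `r`. -/
def IsSubgameRoot (r : List ℕ) : Prop :=
  r ∈ G.H ∧ ∀ (i : Fin G.n) (j : ℕ), j < G.m i →
    (∀ h ∈ G.Info i j, r <+: h) ∨ ∀ h ∈ G.Info i j, ¬ r <+: h

/-- The depth `g` of the smallest subgame containing `A(I_i^j)` (the length of the longest
subgame root preceding every history of `I_i^j`). -/
def sgDepthInfo (i : Fin G.n) (j : ℕ) : ℕ :=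
  (G.H.filter fun r => G.IsSubgameRoot r ∧ ∀ h ∈ G.Info i j, r <+: h).sup List.length

/-- The depth `q(h)` of the smallest subgame containing the last action of `h`. -/
def sgDepthHist (h : List ℕ) : ℕ :=
  (G.H.filter fun r => G.IsSubgameRoot r ∧ r <+: h.dropLast).sup List.length

/-- `C^i_{I_i^j}(h|β)`: product of move probabilities along `h` within the smallest subgame
containing `A(I_i^j)`. -/
def Ch (i : Fin G.n) (j : ℕ) (β : G.Profile) (h : List ℕ) : ℝ :=
  G.prodAlong β (h.take (G.sgDepthInfo i j)) (h.drop (G.sgDepthInfo i j))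

/-- `C^i_{I_i^j}(I_i^j|β)`. -/
def CInfo (i : Fin G.n) (j : ℕ) (β : G.Profile) : ℝ := ∑ h ∈ G.Info i j, G.Ch i j β h

/-- `u^i((a, β^{-I_i^j}) ⋄ I_i^j)`. -/
def uDiamondAct (i : Fin G.n) (j : ℕ) (a : ℕ) (β : G.Profile) : ℝ :=
  ∑ h ∈ G.Zset.filter (fun h => a ∈ h), G.u i h *
    G.prodAlongSkip i j β (h.take (G.sgDepthInfo i j)) (h.drop (G.sgDepthInfo i j))

/-- `Y^i(h|β)`: like `S^i(h|β)` but within the smallest subgame containing the last action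
of `h`. -/
def Yh (i : Fin G.n) (β : G.Profile) (h : List ℕ) : ℝ :=
  G.prodAlongNot i β (h.take (G.sgDepthHist h)) (h.drop (G.sgDepthHist h))

/-- `Y^i(I_i^j|β)`. -/
def YInfo (i : Fin G.n) (j : ℕ) (β : G.Profile) : ℝ := ∑ h ∈ G.Info i j, G.Yh i β h

/-- The belief condition `Y^i(I_i^j|β) · μ^i_{I_i^j}(h) = Y^i(h|β)`. -/
def YConsistent (β : G.Profile) (μ : G.Belief) : Prop :=
  ∀ (i : Fin G.n) (j : ℕ), j < G.m i → ∀ h ∈ G.Info i j,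
    G.YInfo i j β * μ i j h = G.Yh i β h

/-- The expected payoff of player `i` in the subgame rooted at `r` (payoffs of terminal
histories extending `r`, weighted by the move probabilities within the subgame). -/
def uExpFrom (i : Fin G.n) (β : G.Profile) (r : List ℕ) : ℝ :=
  ∑ h ∈ G.Zset.filter (fun h => r <+: h), G.u i h * G.prodAlong β r (h.drop r.length)

/-- `β` is a subgame perfect equilibrium in behavioral strategies: its restriction to every
subgame is a Nash equilibrium in behavioral strategies of that subgame. -/
def IsSubgamePerfect (β : G.Profile) : Prop :=
  G.IsBehProfile β ∧ ∀ r : List ℕ, G.IsSubgameRoot r →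
    ∀ (i : Fin G.n) (b : ℕ → ℕ → ℝ), G.IsBehStrategy i b →
      G.uExpFrom i (G.replace β i b) r ≤ G.uExpFrom i β r

/-- `(β, β̃, μ)` satisfies the subgame perfect characterization (Definition 6 of the
paper). -/
def SubgameChar (β βt : G.Profile) (μ : G.Belief) : Prop :=
  (∀ (i : Fin G.n) (j : ℕ), j < G.m i → ∀ a' ∈ G.infoA i j, ∀ a'' ∈ G.infoA i j,
    G.uDiamondAct i j a' (G.rho i j β βt) < G.uDiamondAct i j a'' (G.rho i j β βt) →
    β i j a' = 0) ∧
  (∀ (i : Fin G.n) (j : ℕ), j < G.m i → ∀ a' ∈ G.infoA i j, ∀ a'' ∈ G.infoA i j,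
    G.uCond i j a' (G.rho i j β βt) μ < G.uCond i j a'' (G.rho i j β βt) μ →
    βt i j a' = 0) ∧
  G.IsBelief μ ∧ G.YConsistent β μ

/-- `(β, μ)` is a semi-sequential equilibrium. -/
def SemiSeqEq (β : G.Profile) (μ : G.Belief) : Prop :=
  G.IsBehProfile β ∧ G.IsBelief μ ∧ G.SelfIndep β μ ∧
  ∀ (i : Fin G.n) (j : ℕ), j < G.m i → ∀ a' ∈ G.infoA i j, ∀ a'' ∈ G.infoA i j,
    G.uCond i j a' β μ < G.uCond i j a'' β μ → β i j a' = 0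

/-- `(β, μ)` is a subgame perfect semi-sequential equilibrium. -/
def SubgameSemiSeqEq (β : G.Profile) (μ : G.Belief) : Prop :=
  G.IsBehProfile β ∧ G.IsBelief μ ∧ G.YConsistent β μ ∧
  ∀ (i : Fin G.n) (j : ℕ), j < G.m i → ∀ a' ∈ G.infoA i j, ∀ a'' ∈ G.infoA i j,
    G.uCond i j a' β μ < G.uCond i j a'' β μ → β i j a' = 0

/-- `d(I_i^j)`: the number of information sets of player `i` containing a prefix of some
history of `I_i^j` (counting `I_i^j` itself). -/
def dInfo (i : Fin G.n) (j : ℕ) : ℕ :=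
  ((Finset.range (G.m i)).filter
    (fun q => ∃ h ∈ G.Info i j, ∃ p : List ℕ, p <+: h ∧ p ∈ G.Info i q)).card

end EFG

namespace EFG

variable (G : EFG)

lemma prodAlong_append (β : G.Profile) (pre l₁ l₂ : List ℕ) :
    G.prodAlong β pre (l₁ ++ l₂) = G.prodAlong β pre l₁ * G.prodAlong β (pre ++ l₁) l₂ := by
  induction l₁ generalizing pre with
  | nil => simp [prodAlong]
  | cons b t ih => simp [prodAlong, ih, mul_assoc]

lemma recordFrom_append (i : Fin G.n) (pre l₁ l₂ : List ℕ) :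
    G.recordFrom i pre (l₁ ++ l₂) = G.recordFrom i pre l₁ ++ G.recordFrom i (pre ++ l₁) l₂ := by
  induction l₁ generalizing pre with
  | nil => simp [recordFrom]
  | cons b t ih => simp [recordFrom, ih]

lemma mem_H_of_append {l₁ l₂ : List ℕ} (h : l₁ ++ l₂ ∈ G.H) : l₁ ∈ G.H :=
  G.prefixClosed _ h _ (List.prefix_append _ _)

lemma mem_A {h : List ℕ} {a : ℕ} : a ∈ G.A h ↔ h ++ [a] ∈ G.H := by
  unfold A
  rw [Finset.mem_filter]
  exact ⟨fun h => h.2, fun hh => ⟨G.act_mem _ _ hh, hh⟩⟩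

lemma mem_infoA {i : Fin G.n} {j a : ℕ} : a ∈ G.infoA i j ↔ ∃ h ∈ G.Info i j, h ++ [a] ∈ G.H := by
  unfold infoA
  simp only [Finset.mem_sup, mem_A]

lemma infoA_eq {i : Fin G.n} {j : ℕ} (hj : j < G.m i) {h : List ℕ} (hh : h ∈ G.Info i j) :
    G.infoA i j = G.A h := by
  ext a
  rw [mem_infoA, mem_A]
  constructor
  · rintro ⟨h', hh', ha⟩
    exact (G.info_actions i j hj h' hh' h hh a).1 ha
  · intro ha
    exact ⟨h, hh, ha⟩

lemma infoA_nonempty {i : Fin G.n} {j : ℕ} (hj : j < G.m i) : (G.infoA i j).Nonempty := by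
  obtain ⟨h, hh⟩ := G.info_nonempty i j hj
  obtain ⟨-, -, ⟨a, ha⟩, -⟩ := (G.info_spec i j h hj).1 hh
  exact ⟨a, (G.mem_infoA).2 ⟨h, hh, ha⟩⟩

lemma mem_info_of {i : Fin G.n} {h : List ℕ} {a : ℕ} (ha : h ++ [a] ∈ G.H) (hP : G.P h = some i) :
    G.infoIdx h < G.m i ∧ h ∈ G.Info i (G.infoIdx h) := by
  have hH := G.mem_H_of_append ha
  have hlt := G.infoIdx_lt i h hH hP ⟨a, ha⟩
  exact ⟨hlt, (G.info_spec i _ h hlt).2 ⟨hH, hP, ⟨a, ha⟩, rfl⟩⟩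

/-- A history using an action of `A(I)` passes through `I`. -/
lemma mem_info_of_act {i : Fin G.n} {j a : ℕ} (hj : j < G.m i) (ha : a ∈ G.infoA i j)
    {p : List ℕ} (hp : p ++ [a] ∈ G.H) : p ∈ G.Info i j := by
  obtain ⟨h, hh, hha⟩ := (G.mem_infoA).1 ha
  obtain ⟨hH, hP, -, hidx⟩ := (G.info_spec i j h hj).1 hh
  have hpH := G.mem_H_of_append hp
  obtain ⟨h1, h2⟩ := G.act_unique h p a hH hpH hha hp
  exact (G.info_spec i j p hj).2 ⟨hpH, h1 ▸ hP, ⟨a, hp⟩, h2 ▸ hidx⟩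

lemma record_lt {i : Fin G.n} {j : ℕ} (hj : j < G.m i) {p : List ℕ} (hp : p ∈ G.Info i j)
    (b : ℕ) (t : List ℕ) :
    (G.recordFrom i [] p).length < (G.recordFrom i [] (p ++ b :: t)).length := by
  obtain ⟨-, hP, -, -⟩ := (G.info_spec i j p hj).1 hp
  rw [recordFrom_append]
  simp [recordFrom, hP]

lemma info_antichain (hPR : G.PerfectRecall) {i : Fin G.n} {j : ℕ} (hj : j < G.m i)
    {h h' : List ℕ} (hh : h ∈ G.Info i j) (hh' : h' ∈ G.Info i j) (hp : h <+: h') : h = h' := by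
  obtain ⟨t, rfl⟩ := hp
  cases t with
  | nil => simp
  | cons b t =>
    have := G.record_lt hj hh b t
    rw [hPR i j hj _ hh _ hh'] at this
    exact absurd this (lt_irrefl _)

/-- Depth of an information set. -/
def dep (i : Fin G.n) (j : ℕ) : ℕ := (G.Info i j).sup fun h => (G.recordFrom i [] h).length

lemma dep_eq (hPR : G.PerfectRecall) {i : Fin G.n} {j : ℕ} (hj : j < G.m i)
    {h : List ℕ} (hh : h ∈ G.Info i j) : G.dep i j = (G.recordFrom i [] h).length := by
  unfold dep
  apply le_antisymm
  · apply Finset.sup_le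
    intro h' hh'
    rw [hPR i j hj _ hh _ hh']
  · exact Finset.le_sup (f := fun h => (G.recordFrom i [] h).length) hh

lemma dep_lt (hPR : G.PerfectRecall) {i : Fin G.n} {j q : ℕ} (hj : j < G.m i) (hq : q < G.m i)
    {h : List ℕ} (hh : h ∈ G.Info i q) {b : ℕ} (hb : b ∈ h) (hbA : b ∈ G.infoA i j) :
    G.dep i j < G.dep i q := by
  obtain ⟨p, t, rfl⟩ := List.append_of_mem hb
  have hH : p ++ b :: t ∈ G.H := ((G.info_spec i q _ hq).1 hh).1
  have hpb : p ++ [b] ∈ G.H := by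
    apply G.mem_H_of_append (l₂ := t); simpa using hH
  have hp := G.mem_info_of_act hj hbA hpb
  rw [G.dep_eq hPR hj hp, G.dep_eq hPR hq hh]
  exact G.record_lt hj hp b t

/-- Tree decomposition. -/
lemma sum_tree (r : List ℕ) (hr : r ∈ G.H) (f : List ℕ → ℝ) :
    ∑ h ∈ G.H.filter (fun h => r <+: h), f h =
      f r + ∑ a ∈ G.A r, ∑ h ∈ G.H.filter (fun h => (r ++ [a]) <+: h), f h := by
  rw [← Finset.sum_biUnion]
  · rw [← Finset.sum_insert (s := (G.A r).biUnion _) (a := r)]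
    · apply Finset.sum_congr _ (fun _ _ => rfl)
      ext h
      simp only [Finset.mem_filter, Finset.mem_insert, Finset.mem_biUnion, mem_A]
      constructor
      · rintro ⟨hH, t, rfl⟩
        cases t with
        | nil => left; simp
        | cons a t =>
          right
          refine ⟨a, ?_, hH, ?_⟩
          · apply G.mem_H_of_append (l₂ := t); simpa using hH
          · exact ⟨t, by simp⟩
      · rintro (rfl | ⟨a, ha, hH, hp⟩)
        · exact ⟨hr, List.prefix_rfl⟩
        · exact ⟨hH, (List.prefix_append _ _).trans hp⟩
    · simp only [Finset.mem_filter, Finset.mem_biUnion, not_exists, not_and]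
      intro a _ _ hp
      have := hp.length_le
      simp at this
  · intro a _ b _ hab
    simp only [Function.onFun]
    rw [Finset.disjoint_left]
    intro h h1 h2
    simp only [Finset.mem_filter] at h1 h2
    have := List.prefix_of_prefix_length_le h1.2 h2.2 (by simp)
    have h3 := this.eq_of_length (by simp)
    simp at h3
    exact hab h3

lemma uExpFrom_eq (i : Fin G.n) (β : G.Profile) (r : List ℕ) :
    G.uExpFrom i β r = ∑ h ∈ G.H.filter (fun h => r <+: h),
      if h ∈ G.Zset then G.u i h * G.prodAlong β r (h.drop r.length) else 0 := by
  unfold uExpFrom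
  rw [← Finset.sum_filter]
  apply Finset.sum_congr _ (fun _ _ => rfl)
  ext h
  simp only [Finset.mem_filter, Zset]
  tauto

lemma prodAlong_drop_step (β : G.Profile) {r h : List ℕ} {a : ℕ} (hp : (r ++ [a]) <+: h) :
    G.prodAlong β r (h.drop r.length) =
      G.moveProb β r a * G.prodAlong β (r ++ [a]) (h.drop (r ++ [a]).length) := by
  obtain ⟨t, rfl⟩ := hp
  rw [List.drop_left]
  simp [prodAlong]

lemma uExpFrom_step (i : Fin G.n) (β : G.Profile) {r : List ℕ} (hr : r ∈ G.H)
    (hne : ∃ a, r ++ [a] ∈ G.H) :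
    G.uExpFrom i β r = ∑ a ∈ G.A r, G.moveProb β r a * G.uExpFrom i β (r ++ [a]) := by
  rw [uExpFrom_eq, sum_tree _ _ hr, if_neg, zero_add]
  · apply Finset.sum_congr rfl
    intro a ha
    rw [uExpFrom_eq, Finset.mul_sum]
    apply Finset.sum_congr rfl
    intro h hh
    rw [G.prodAlong_drop_step β (Finset.mem_filter.1 hh).2]
    split_ifs <;> ring
  · simp only [Zset, Finset.mem_filter, not_and, not_forall, not_not]
    exact fun _ => hne

lemma uExpFrom_terminal (i : Fin G.n) (β : G.Profile) {r : List ℕ} (hr : r ∈ G.H)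
    (hne : ¬ ∃ a, r ++ [a] ∈ G.H) :
    G.uExpFrom i β r = G.u i r := by
  have hA : G.A r = ∅ := by
    ext a; simp only [mem_A, Finset.notMem_empty, iff_false]; exact fun h => hne ⟨a, h⟩
  rw [uExpFrom_eq, sum_tree _ _ hr, hA]
  have hz : r ∈ G.Zset := by
    simp only [Zset, Finset.mem_filter]; exact ⟨hr, fun a h => hne ⟨a, h⟩⟩
  simp [hz, prodAlong]

/-- Local gain. -/
def gain (i : Fin G.n) (σ' σ : G.Profile) (h : List ℕ) : ℝ :=
  ∑ a ∈ G.A h, (G.moveProb σ' h a - G.moveProb σ h a) * G.uExpFrom i σ' (h ++ [a])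

/-- Performance difference lemma. -/
lemma perf_diff (i : Fin G.n) (σ' σ : G.Profile) (k : ℕ) : ∀ r ∈ G.H,
    G.H.sup List.length ≤ r.length + k →
    G.uExpFrom i σ' r - G.uExpFrom i σ r =
      ∑ h ∈ G.H.filter (fun h => r <+: h), G.prodAlong σ r (h.drop r.length) * G.gain i σ' σ h := by
  have key : ∀ r ∈ G.H, (∀ a ∈ G.A r, G.uExpFrom i σ' (r ++ [a]) - G.uExpFrom i σ (r ++ [a]) =
      ∑ h ∈ G.H.filter (fun h => (r ++ [a]) <+: h),
        G.prodAlong σ (r ++ [a]) (h.drop (r ++ [a]).length) * G.gain i σ' σ h) →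
    G.uExpFrom i σ' r - G.uExpFrom i σ r =
      ∑ h ∈ G.H.filter (fun h => r <+: h), G.prodAlong σ r (h.drop r.length) * G.gain i σ' σ h := by
    intro r hr ih
    rw [sum_tree _ _ hr]
    have h2 : ∀ a ∈ G.A r, ∑ h ∈ G.H.filter (fun h => (r ++ [a]) <+: h),
        G.prodAlong σ r (h.drop r.length) * G.gain i σ' σ h =
        G.moveProb σ r a * (G.uExpFrom i σ' (r ++ [a]) - G.uExpFrom i σ (r ++ [a])) := by
      intro a ha
      rw [ih a ha, Finset.mul_sum]
      apply Finset.sum_congr rfl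
      intro h hh
      rw [G.prodAlong_drop_step σ (Finset.mem_filter.1 hh).2]
      ring
    rw [Finset.sum_congr rfl h2]
    simp only [List.drop_length, prodAlong, one_mul, gain]
    rw [← Finset.sum_add_distrib]
    by_cases hne : ∃ a, r ++ [a] ∈ G.H
    · rw [G.uExpFrom_step i σ' hr hne, G.uExpFrom_step i σ hr hne, ← Finset.sum_sub_distrib]
      apply Finset.sum_congr rfl
      intro a _
      ring
    · rw [G.uExpFrom_terminal i σ' hr hne, G.uExpFrom_terminal i σ hr hne]
      have hA : G.A r = ∅ := by
        ext a; simp only [mem_A, Finset.notMem_empty, iff_false]; exact fun h => hne ⟨a, h⟩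
      simp [hA]
  induction k with
  | zero =>
    intro r hr hk
    apply key r hr
    intro a ha
    have := Finset.le_sup (f := List.length) ((G.mem_A).1 ha)
    rw [List.length_append, List.length_singleton] at this
    omega
  | succ k ih =>
    intro r hr hk
    apply key r hr
    intro a ha
    exact ih _ ((G.mem_A).1 ha) (by
      rw [List.length_append, List.length_singleton]; omega)

/-- Product of own probabilities over a record. -/
def own (b : ℕ → ℕ → ℝ) (l : List (ℕ × ℕ)) : ℝ := (l.map fun p => b p.1 p.2).prod

lemma prodAlong_own (i : Fin G.n) (β : G.Profile) (b : ℕ → ℕ → ℝ) (pre l : List ℕ) :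
    G.prodAlong (G.replace β i b) pre l =
      own b (G.recordFrom i pre l) * G.prodAlongNot i β pre l := by
  induction l generalizing pre with
  | nil => simp [prodAlong, prodAlongNot, own, recordFrom]
  | cons a t ih =>
    simp only [prodAlong, prodAlongNot, recordFrom, ih]
    by_cases hP : G.P pre = some i
    · simp [hP, own, moveProb, replace]; ring
    · simp only [hP, if_false, List.nil_append]
      have : G.moveProb (G.replace β i b) pre a = G.moveProb β pre a := by
        unfold moveProb
        cases hp : G.P pre with
        | none => rfl
        | some p =>
          have : p ≠ i := fun h => hP (by rw [hp, h])
          simp [replace, this]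
      rw [this]; ring

lemma moveProb_nonneg {β : G.Profile} (hβ : G.IsBehProfile β) {h : List ℕ} {a : ℕ}
    (ha : h ++ [a] ∈ G.H) : 0 ≤ G.moveProb β h a := by
  unfold moveProb
  cases hp : G.P h with
  | none => exact G.fc_nonneg _ _
  | some p =>
    obtain ⟨h1, h2⟩ := G.mem_info_of ha hp
    exact (hβ p _ h1).1 a ((G.mem_infoA).2 ⟨h, h2, ha⟩)

lemma prodAlong_nonneg {β : G.Profile} (hβ : G.IsBehProfile β) (pre l : List ℕ)
    (hl : pre ++ l ∈ G.H) : 0 ≤ G.prodAlong β pre l := by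
  induction l generalizing pre with
  | nil => simp [prodAlong]
  | cons a t ih =>
    have h1 : (pre ++ [a]) ++ t ∈ G.H := by simpa using hl
    exact mul_nonneg (G.moveProb_nonneg hβ (G.mem_H_of_append h1)) (ih _ h1)

lemma prodAlongNot_nonneg (i : Fin G.n) {β : G.Profile} (hβ : G.IsBehProfile β) (pre l : List ℕ)
    (hl : pre ++ l ∈ G.H) : 0 ≤ G.prodAlongNot i β pre l := by
  induction l generalizing pre with
  | nil => simp [prodAlongNot]
  | cons a t ih =>
    have h1 : (pre ++ [a]) ++ t ∈ G.H := by simpa using hl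
    refine mul_nonneg ?_ (ih _ h1)
    split_ifs
    · exact zero_le_one
    · exact G.moveProb_nonneg hβ (G.mem_H_of_append h1)

lemma replace_beh {β : G.Profile} (hβ : G.IsBehProfile β) {i : Fin G.n} {b : ℕ → ℕ → ℝ}
    (hb : G.IsBehStrategy i b) : G.IsBehProfile (G.replace β i b) := by
  intro p
  unfold replace
  by_cases h : p = i
  · subst h; simpa using hb
  · simpa [h] using hβ p

lemma replace_self (β : G.Profile) (i : Fin G.n) : G.replace β i (β i) = β := by
  funext p
  unfold replace
  split_ifs with h
  · rw [h]
  · rfl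

/-- The smallest subgame root above an information set. -/
lemma exists_root {i : Fin G.n} {j : ℕ} :
    ∃ r, G.IsSubgameRoot r ∧ (∀ h ∈ G.Info i j, r <+: h) ∧ r.length = G.sgDepthInfo i j := by
  have hne : (G.H.filter fun r => G.IsSubgameRoot r ∧ ∀ h ∈ G.Info i j, r <+: h).Nonempty := by
    refine ⟨[], Finset.mem_filter.2 ⟨G.empty_mem, ⟨G.empty_mem, ?_⟩, ?_⟩⟩
    · intro i j _; left; intro h _; exact List.nil_prefix
    · intro h _; exact List.nil_prefix
  obtain ⟨r, hr, he⟩ := Finset.exists_mem_eq_sup _ hne List.length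
  rw [Finset.mem_filter] at hr
  exact ⟨r, hr.2.1, hr.2.2, he.symm⟩

lemma root_len_le {i : Fin G.n} {j : ℕ} {r : List ℕ} (hr : G.IsSubgameRoot r)
    (h : ∀ h ∈ G.Info i j, r <+: h) : r.length ≤ G.sgDepthInfo i j := by
  unfold sgDepthInfo
  exact Finset.le_sup (f := List.length) (Finset.mem_filter.2 ⟨hr.1, hr, h⟩)

lemma sgDepthHist_eq (hPR : G.PerfectRecall) {i : Fin G.n} {j : ℕ} (hj : j < G.m i)
    {h h' : List ℕ} (hh : h ∈ G.Info i j) (hh' : h' ∈ G.Info i j) (hne : h ≠ h') :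
    G.sgDepthHist h = G.sgDepthInfo i j := by
  unfold sgDepthHist sgDepthInfo
  congr 1
  apply Finset.filter_congr
  intro r _
  apply and_congr_right
  intro hr
  constructor
  · intro hp
    rcases hr.2 i j hj with h1 | h1
    · exact h1
    · exact absurd (hp.trans (List.dropLast_prefix _)) (h1 h hh)
  · intro hall
    obtain ⟨t, ht⟩ := hall h hh
    rcases List.eq_nil_or_concat t with rfl | ⟨t', x, rfl⟩
    · exfalso
      apply hne
      apply G.info_antichain hPR hj hh hh'
      have := hall h' hh'
      rw [← ht]; simpa using this
    · rw [← ht]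
      refine ⟨t', ?_⟩
      simp [← List.append_assoc]

lemma nuAux_scan (i : Fin G.n) (j : ℕ) (σ : G.Profile) (w : List ℕ → ℝ) (pre l : List ℕ) (a : ℕ)
    (t : List ℕ) (hm : pre ++ l ∈ G.Info i j)
    (hu : ∀ p, p <+: pre ++ l → p ∈ G.Info i j → p = pre ++ l) :
    G.nuAux i j σ w pre (l ++ a :: t) = w (pre ++ l) * G.prodAlong σ (pre ++ l ++ [a]) t := by
  induction l generalizing pre with
  | nil =>
    simp only [List.append_nil] at hm
    simp [nuAux, hm]
  | cons b l ih =>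
    have hn : pre ∉ G.Info i j := by
      intro h
      have := hu pre (List.prefix_append _ _) h
      simp at this
    have e : pre ++ b :: l = (pre ++ [b]) ++ l := by simp
    rw [e] at hm hu ⊢
    simp only [List.cons_append, nuAux, hn, if_false]
    exact ih _ hm hu

lemma uCond_eq (hPR : G.PerfectRecall) {i : Fin G.n} {j : ℕ} (hj : j < G.m i) {a : ℕ}
    (ha : a ∈ G.infoA i j) (σ : G.Profile) (μ : G.Belief) :
    G.uCond i j a σ μ = ∑ h ∈ G.Info i j, μ i j h * G.uExpFrom i σ (h ++ [a]) := by
  unfold uCond uExpFrom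
  simp only [Finset.mul_sum, Finset.sum_filter]
  rw [Finset.sum_comm]
  apply Finset.sum_congr rfl
  intro z hz
  have hzH : z ∈ G.H := (Finset.mem_filter.1 hz).1
  by_cases haz : a ∈ z
  · rw [if_pos haz]
    obtain ⟨p, t, rfl⟩ := List.append_of_mem haz
    have hpa : p ++ [a] ∈ G.H := by
      apply G.mem_H_of_append (l₂ := t); simpa using hzH
    have hp := G.mem_info_of_act hj ha hpa
    have hpz : (p ++ [a]) <+: p ++ a :: t := ⟨t, by simp⟩
    rw [Finset.sum_eq_single_of_mem p hp, if_pos hpz]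
    · have hnu : G.nu i j σ μ (p ++ a :: t) = μ i j p * G.prodAlong σ (p ++ [a]) t := by
        have := G.nuAux_scan i j σ (μ i j) [] p a t (by simpa using hp) (by
          intro p' h1 h2
          exact G.info_antichain hPR hj h2 hp h1)
        simpa [nu] using this
      have e : (p ++ a :: t).drop (p ++ [a]).length = t := by
        rw [show p ++ a :: t = (p ++ [a]) ++ t by simp, List.drop_left]
      rw [hnu, e]
      ring
    · intro h hh hne
      rw [if_neg, mul_zero]
      intro hpre
      apply hne
      have h1 : h <+: p ++ a :: t := (List.prefix_append _ _).trans hpre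
      have h2 : p <+: p ++ a :: t := List.prefix_append _ _
      rcases List.prefix_or_prefix_of_prefix h1 h2 with h3 | h3
      · exact G.info_antichain hPR hj hh hp h3
      · exact (G.info_antichain hPR hj hp hh h3).symm
  · rw [if_neg haz]
    symm
    apply Finset.sum_eq_zero
    intro h hh
    rw [if_neg, mul_zero]
    intro hpre
    apply haz
    exact hpre.subset (by simp)

lemma rho_agree {i : Fin G.n} {j : ℕ} (β βt : G.Profile)
    {h : List ℕ} {a : ℕ} (ha : a ∈ G.infoA i j) :
    G.uExpFrom i (G.rho i j β βt) (h ++ [a]) = G.uExpFrom i (G.replace β i (βt i)) (h ++ [a]) := by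
  have key : ∀ (l pre : List ℕ), a ∈ pre → pre ++ l ∈ G.H →
      G.prodAlong (G.rho i j β βt) pre l = G.prodAlong (G.replace β i (βt i)) pre l := by
    intro l
    induction l with
    | nil => intros; rfl
    | cons b t ih =>
      intro pre hpre hH
      have h1 : (pre ++ [b]) ++ t ∈ G.H := by simpa using hH
      have h2 := G.mem_H_of_append h1
      simp only [prodAlong]
      rw [ih (pre ++ [b]) (by simp [hpre]) h1]
      congr 1
      unfold moveProb
      cases hp : G.P pre with
      | none => rfl
      | some p =>
        simp only [Option.elim_some, rho, replace]
        by_cases hpi : p = i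
        · subst hpi
          obtain ⟨-, h4⟩ := G.mem_info_of h2 hp
          rw [if_pos ⟨rfl, pre, h4, a, hpre, ha⟩, if_pos rfl]
        · rw [if_neg (fun h => hpi h.1), if_neg hpi]
  unfold uExpFrom
  apply Finset.sum_congr rfl
  intro z hz
  obtain ⟨hz1, t, rfl⟩ := Finset.mem_filter.1 hz
  rw [List.drop_left, key t (h ++ [a]) (by simp) (Finset.mem_filter.1 hz1).1]

/-- Belief consistency transferred to `C`. -/
lemma Ch_consistent (hPR : G.PerfectRecall) {β : G.Profile} {μ : G.Belief} {i : Fin G.n} {j : ℕ}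
    (hj : j < G.m i) (hsum : ∑ h ∈ G.Info i j, μ i j h = 1)
    (hY : ∀ h ∈ G.Info i j, G.YInfo i j β * μ i j h = G.Yh i β h) (b : ℕ → ℕ → ℝ)
    {h : List ℕ} (hh : h ∈ G.Info i j) :
    G.CInfo i j (G.replace β i b) * μ i j h = G.Ch i j (G.replace β i b) h := by
  by_cases hs : ∃ h' ∈ G.Info i j, h' ≠ h
  · obtain ⟨h', hh', hne⟩ := hs
    have hd : ∀ g ∈ G.Info i j, G.sgDepthHist g = G.sgDepthInfo i j := by
      intro g hg
      by_cases hgh : g = h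
      · exact G.sgDepthHist_eq hPR hj hg hh' (by rw [hgh]; exact hne.symm)
      · exact G.sgDepthHist_eq hPR hj hg hh hgh
    obtain ⟨r, hr, hrp, hrl⟩ := G.exists_root (i := i) (j := j)
    obtain ⟨c, hc⟩ : ∃ c, ∀ g ∈ G.Info i j, own b (G.recordFrom i r (g.drop r.length)) = c := by
      refine ⟨own b (G.recordFrom i r (h.drop r.length)), ?_⟩
      intro g hg
      congr 1
      have e := hPR i j hj g hg h hh
      obtain ⟨t, rfl⟩ := hrp g hg
      obtain ⟨t', rfl⟩ := hrp h hh
      rw [recordFrom_append, recordFrom_append] at e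
      rw [List.drop_left, List.drop_left]
      simpa using e
    have hC : ∀ g ∈ G.Info i j, G.Ch i j (G.replace β i b) g = c * G.Yh i β g := by
      intro g hg
      unfold Ch Yh
      rw [hd g hg, prodAlong_own, ← hc g hg, ← hrl]
      obtain ⟨t, rfl⟩ := hrp g hg
      rw [List.take_left]
    unfold CInfo
    rw [Finset.sum_congr rfl hC, ← Finset.mul_sum, hC h hh, ← hY h hh]
    unfold YInfo
    ring
  · have : G.Info i j = {h} := by
      ext g
      simp only [Finset.mem_singleton]
      constructor
      · intro hg; by_contra hne; exact hs ⟨g, hg, hne⟩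
      · rintro rfl; exact hh
    unfold CInfo
    rw [this] at hsum ⊢
    simp at hsum
    simp [hsum]

/-- The root of the smallest subgame containing an information set. -/
def rt (i : Fin G.n) (j : ℕ) : List ℕ := Classical.choose (G.exists_root (i := i) (j := j))

lemma rt_spec (i : Fin G.n) (j : ℕ) : G.IsSubgameRoot (G.rt i j) ∧
    (∀ h ∈ G.Info i j, G.rt i j <+: h) ∧ (G.rt i j).length = G.sgDepthInfo i j :=
  Classical.choose_spec (G.exists_root (i := i) (j := j))

lemma rt_ext {i : Fin G.n} {j : ℕ} (hj : j < G.m i) {r : List ℕ} (hr : G.IsSubgameRoot r)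
    (h : ∀ h ∈ G.Info i j, r <+: h) : r <+: G.rt i j := by
  obtain ⟨g, hg⟩ := G.info_nonempty i j hj
  apply List.prefix_of_prefix_length_le (h g hg) ((G.rt_spec i j).2.1 g hg)
  rw [(G.rt_spec i j).2.2]
  exact G.root_len_le hr h

/-- Probability of reaching the smallest subgame around `I` from `r`. -/
def reach (i : Fin G.n) (j : ℕ) (r : List ℕ) (σ : G.Profile) : ℝ :=
  G.prodAlong σ r ((G.rt i j).drop r.length)

lemma prodAlong_reach {i : Fin G.n} {j : ℕ} (hj : j < G.m i) {r : List ℕ} (hr : G.IsSubgameRoot r)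
    (hp : ∀ h ∈ G.Info i j, r <+: h) (σ : G.Profile) {h : List ℕ} (hh : h ∈ G.Info i j) :
    G.prodAlong σ r (h.drop r.length) = G.reach i j r σ * G.Ch i j σ h := by
  obtain ⟨-, h2, h3⟩ := G.rt_spec i j
  unfold reach Ch
  rw [← h3]
  obtain ⟨t, ht⟩ := G.rt_ext hj hr hp
  obtain ⟨s, rfl⟩ := h2 h hh
  rw [List.take_left, List.drop_left, ← ht, List.append_assoc, List.drop_left, List.drop_left,
    prodAlong_append]

lemma sum_by_info (i : Fin G.n) {r : List ℕ} (hr : G.IsSubgameRoot r) (f : List ℕ → ℝ)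
    (hf : ∀ h ∈ G.H, ¬ (G.P h = some i ∧ ∃ a, h ++ [a] ∈ G.H) → f h = 0) :
    ∑ h ∈ G.H.filter (fun h => r <+: h), f h =
      ∑ j ∈ (Finset.range (G.m i)).filter (fun j => ∀ h ∈ G.Info i j, r <+: h),
        ∑ h ∈ G.Info i j, f h := by
  rw [← Finset.sum_biUnion]
  · symm
    apply Finset.sum_subset
    · intro h hh
      simp only [Finset.mem_biUnion, Finset.mem_filter, Finset.mem_range] at hh ⊢
      obtain ⟨j, ⟨hj, hp⟩, hh⟩ := hh
      exact ⟨((G.info_spec i j h hj).1 hh).1, hp h hh⟩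
    · intro h hh hn
      simp only [Finset.mem_biUnion, Finset.mem_filter, Finset.mem_range] at hh hn
      apply hf h hh.1
      rintro ⟨hP, a, ha⟩
      obtain ⟨h1, h2⟩ := G.mem_info_of ha hP
      apply hn
      refine ⟨_, ⟨h1, ?_⟩, h2⟩
      rcases hr.2 i _ h1 with h3 | h3
      · exact h3
      · exact absurd hh.2 (h3 h h2)
  · intro j hj q hq hne
    simp only [Function.onFun]
    rw [Finset.disjoint_left]
    intro h h1 h2
    simp only [Finset.coe_filter, Finset.mem_range, Set.mem_ofPred_eq] at hj hq
    have e1 := ((G.info_spec i j h hj.1).1 h1).2.2.2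
    have e2 := ((G.info_spec i q h hq.1).1 h2).2.2.2
    exact hne (e1.symm.trans e2)

/-- The difference formula. -/
lemma diff_formula (hPR : G.PerfectRecall) {β βt : G.Profile} {μ : G.Belief} (i : Fin G.n)
    (hsum : ∀ j < G.m i, ∑ h ∈ G.Info i j, μ i j h = 1)
    (hY : ∀ j < G.m i, ∀ h ∈ G.Info i j, G.YInfo i j β * μ i j h = G.Yh i β h)
    (b : ℕ → ℕ → ℝ) {r : List ℕ} (hr : G.IsSubgameRoot r) :
    G.uExpFrom i (G.replace β i (βt i)) r - G.uExpFrom i (G.replace β i b) r =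
      ∑ j ∈ (Finset.range (G.m i)).filter (fun j => ∀ h ∈ G.Info i j, r <+: h),
        G.reach i j r (G.replace β i b) * (G.CInfo i j (G.replace β i b) *
          ∑ a ∈ G.infoA i j, (βt i j a - b j a) * G.uCond i j a (G.rho i j β βt) μ) := by
  rw [G.perf_diff i _ _ (G.H.sup List.length) r hr.1 (by omega), G.sum_by_info i hr]
  · apply Finset.sum_congr rfl
    intro j hj
    simp only [Finset.mem_filter, Finset.mem_range] at hj
    obtain ⟨hj, hp⟩ := hj
    have h1 : ∀ h ∈ G.Info i j, G.prodAlong (G.replace β i b) r (h.drop r.length) *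
        G.gain i (G.replace β i (βt i)) (G.replace β i b) h =
        ∑ a ∈ G.infoA i j, G.reach i j r (G.replace β i b) * (G.CInfo i j (G.replace β i b) *
          ((βt i j a - b j a) * (μ i j h * G.uExpFrom i (G.rho i j β βt) (h ++ [a])))) := by
      intro h hh
      rw [G.prodAlong_reach hj hr hp _ hh, ← G.Ch_consistent hPR hj (hsum j hj) (hY j hj) b hh]
      unfold gain
      rw [← G.infoA_eq hj hh, Finset.mul_sum]
      apply Finset.sum_congr rfl
      intro a ha
      obtain ⟨-, hP, -, hidx⟩ := (G.info_spec i j h hj).1 hh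
      rw [G.rho_agree β βt ha]
      simp only [moveProb, hP, hidx, Option.elim_some]
      simp only [replace, if_true]
      ring
    rw [Finset.sum_congr rfl h1, Finset.sum_comm, Finset.mul_sum, Finset.mul_sum]
    apply Finset.sum_congr rfl
    intro a ha
    rw [G.uCond_eq hPR hj ha, Finset.mul_sum, Finset.mul_sum, Finset.mul_sum]
  · intro h hH hn
    have : G.gain i (G.replace β i (βt i)) (G.replace β i b) h = 0 := by
      unfold gain
      apply Finset.sum_eq_zero
      intro a ha
      have hP : G.P h ≠ some i := fun hP => hn ⟨hP, a, (G.mem_A).1 ha⟩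
      have : G.moveProb (G.replace β i (βt i)) h a = G.moveProb (G.replace β i b) h a := by
        unfold moveProb
        cases hp : G.P h with
        | none => rfl
        | some p =>
          have : p ≠ i := fun h' => hP (by rw [hp, h'])
          simp [replace, this]
      rw [this]; ring
    rw [this, mul_zero]

lemma reach_nonneg {σ : G.Profile} (hσ : G.IsBehProfile σ) {i : Fin G.n} {j : ℕ} (hj : j < G.m i)
    {r : List ℕ} (hr : G.IsSubgameRoot r) (hp : ∀ h ∈ G.Info i j, r <+: h) :
    0 ≤ G.reach i j r σ := by
  unfold reach
  have h1 := (G.rt_spec i j).1.1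
  obtain ⟨t, ht⟩ := G.rt_ext hj hr hp
  rw [← ht] at h1 ⊢
  rw [List.drop_left]
  exact G.prodAlong_nonneg hσ _ _ h1

lemma CInfo_nonneg {σ : G.Profile} (hσ : G.IsBehProfile σ) {i : Fin G.n} {j : ℕ} (hj : j < G.m i) :
    0 ≤ G.CInfo i j σ := by
  unfold CInfo Ch
  apply Finset.sum_nonneg
  intro h hh
  apply G.prodAlong_nonneg hσ
  rw [List.take_append_drop]
  exact ((G.info_spec i j h hj).1 hh).1

lemma Yh_nonneg {β : G.Profile} (hβ : G.IsBehProfile β) {i : Fin G.n} {j : ℕ} (hj : j < G.m i)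
    {h : List ℕ} (hh : h ∈ G.Info i j) : 0 ≤ G.Yh i β h := by
  unfold Yh
  apply G.prodAlongNot_nonneg i hβ
  rw [List.take_append_drop]
  exact ((G.info_spec i j h hj).1 hh).1

lemma exists_belief {β : G.Profile} (hβ : G.IsBehProfile β) :
    ∃ μ : G.Belief, ∀ (i : Fin G.n) (j : ℕ), j < G.m i →
      (∑ h ∈ G.Info i j, μ i j h = 1) ∧
      ∀ h ∈ G.Info i j, G.YInfo i j β * μ i j h = G.Yh i β h ∧ 0 ≤ μ i j h := by
  refine ⟨fun i j h => if G.YInfo i j β = 0 then 1 / ((G.Info i j).card : ℝ)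
    else G.Yh i β h / G.YInfo i j β, ?_⟩
  intro i j hj
  have hnn : 0 ≤ G.YInfo i j β := Finset.sum_nonneg fun h hh => G.Yh_nonneg hβ hj hh
  by_cases h0 : G.YInfo i j β = 0
  · simp only [h0, if_true]
    have hc : ((G.Info i j).card : ℝ) ≠ 0 := by
      have := (G.info_nonempty i j hj).card_pos
      positivity
    constructor
    · rw [Finset.sum_const, nsmul_eq_mul]; field_simp
    · intro h hh
      constructor
      · rw [zero_mul]
        exact ((Finset.sum_eq_zero_iff_of_nonneg (fun h hh => G.Yh_nonneg hβ hj hh)).1 h0 h hh).symm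
      · positivity
  · simp only [h0, if_false]
    constructor
    · rw [← Finset.sum_div]; exact div_self h0
    · intro h hh
      exact ⟨by field_simp, div_nonneg (G.Yh_nonneg hβ hj hh) hnn⟩

/-- Backward induction. -/
lemma exists_seq_rational (hPR : G.PerfectRecall) (β : G.Profile) (μ : G.Belief) :
    ∃ (βt : G.Profile) (best : Fin G.n → ℕ → ℕ), ∀ (i : Fin G.n) (j : ℕ), j < G.m i →
      best i j ∈ G.infoA i j ∧ (∀ a, βt i j a = if a = best i j then 1 else 0) ∧
      ∀ a ∈ G.infoA i j, G.uCond i j a (G.rho i j β βt) μ ≤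
        G.uCond i j (best i j) (G.rho i j β βt) μ := by
  have bound : ∃ K, ∀ (i : Fin G.n) (j : ℕ), j < G.m i → G.dep i j < K := by
    refine ⟨(Finset.univ.sup fun i => (Finset.range (G.m i)).sup fun j => G.dep i j) + 1, ?_⟩
    intro i j hj
    apply Nat.lt_succ_of_le
    exact (Finset.le_sup (f := fun j => G.dep i j) (Finset.mem_range.2 hj)).trans
      (Finset.le_sup (f := fun i => (Finset.range (G.m i)).sup fun j => G.dep i j)
        (Finset.mem_univ i))
  obtain ⟨K, hK⟩ := bound
  have step : ∀ k : ℕ, ∃ (βt : G.Profile) (best : Fin G.n → ℕ → ℕ),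
      ∀ (i : Fin G.n) (j : ℕ), j < G.m i → K ≤ G.dep i j + k →
      best i j ∈ G.infoA i j ∧ (∀ a, βt i j a = if a = best i j then 1 else 0) ∧
      ∀ a ∈ G.infoA i j, G.uCond i j a (G.rho i j β βt) μ ≤
        G.uCond i j (best i j) (G.rho i j β βt) μ := by
    intro k
    induction k with
    | zero =>
      refine ⟨β, fun _ _ => 0, fun i j hj hk => ?_⟩
      have := hK i j hj
      omega
    | succ k ih =>
      obtain ⟨βt, best, hb⟩ := ih
      have hmax : ∀ (i : Fin G.n) (j : ℕ), ∃ c, j < G.m i → c ∈ G.infoA i j ∧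
          ∀ a ∈ G.infoA i j, G.uCond i j a (G.rho i j β βt) μ ≤
            G.uCond i j c (G.rho i j β βt) μ := by
        intro i j
        by_cases hj : j < G.m i
        · obtain ⟨c, hc, hc2⟩ := Finset.exists_max_image (G.infoA i j)
            (fun a => G.uCond i j a (G.rho i j β βt) μ) (G.infoA_nonempty hj)
          exact ⟨c, fun _ => ⟨hc, hc2⟩⟩
        · exact ⟨0, fun h => absurd h hj⟩
      choose c hc using hmax
      let Q : Fin G.n → ℕ → Prop := fun i j => j < G.m i ∧ G.dep i j + k + 1 = K
      let βt' : G.Profile := fun i j => if Q i j then fun a => if a = c i j then 1 else 0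
        else βt i j
      have hrho : ∀ (i : Fin G.n) (j : ℕ), j < G.m i → K ≤ G.dep i j + (k + 1) →
          G.rho i j β βt' = G.rho i j β βt := by
        intro i j hj hk
        funext p q
        unfold rho
        split_ifs with h
        · obtain ⟨rfl, h, hh, b, hbh, hbA⟩ := h
          have : ¬ Q p q := by
            rintro ⟨hq, hq2⟩
            have := G.dep_lt hPR hj hq hh hbh hbA
            omega
          simp only [βt', this, if_false]
        · rfl
      refine ⟨βt', fun i j => if Q i j then c i j else best i j, ?_⟩
      intro i j hj hk
      rw [hrho i j hj hk]
      by_cases hQ : Q i j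
      · simp only [βt', hQ, if_true]
        exact ⟨(hc i j hj).1, fun a => trivial, (hc i j hj).2⟩
      · simp only [βt', hQ, if_false]
        apply hb i j hj
        have : ¬ G.dep i j + k + 1 = K := fun h => hQ ⟨hj, h⟩
        omega
  obtain ⟨βt, best, h⟩ := step K
  exact ⟨βt, best, fun i j hj => h i j hj (by omega)⟩

end EFG

lemma gain_aux (s : Finset ℕ) (x y u l : ℕ → ℝ) (z : ℝ) (hx : ∑ a ∈ s, x a = 1)
    (hy : ∑ a ∈ s, y a = 1) (hu : ∀ a ∈ s, u a + l a - z = 0) (hxl : ∀ a ∈ s, x a * l a = 0) :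
    ∑ a ∈ s, (x a - y a) * u a = ∑ a ∈ s, y a * l a := by
  have h1 : ∀ a ∈ s, (x a - y a) * u a = y a * l a + z * x a - z * y a := by
    intro a ha
    have h2 := hu a ha
    have h3 := hxl a ha
    have h4 : u a = z - l a := by linarith
    rw [h4]
    linear_combination -h3
  rw [Finset.sum_congr rfl h1, Finset.sum_sub_distrib, Finset.sum_add_distrib, ← Finset.mul_sum,
    ← Finset.mul_sum, hx, hy]
  ring

/-- Corollary 2: `β*` is a subgame perfect equilibrium in behavioral strategies iff the
polynomial system (19), using conditional expected payoffs, is solvable. -/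
theorem stmt11 (G : EFG) (hPR : G.PerfectRecall) (β : G.Profile) (hβ : G.IsBehProfile β) :
    G.IsSubgamePerfect β ↔
      ∃ (βt : G.Profile) (μ : G.Belief) (lam lamt : Fin G.n → ℕ → ℕ → ℝ)
        (ze zet : Fin G.n → ℕ → ℝ),
        (∀ (i : Fin G.n) (j : ℕ), j < G.m i → ∀ a ∈ G.infoA i j,
          G.CInfo i j β * G.uCond i j a (G.rho i j β βt) μ + lam i j a - ze i j = 0) ∧
        (∀ (i : Fin G.n) (j : ℕ), j < G.m i → ∀ a ∈ G.infoA i j,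
          G.uCond i j a (G.rho i j β βt) μ + lamt i j a - zet i j = 0) ∧
        (∀ (i : Fin G.n) (j : ℕ), j < G.m i → ∀ h ∈ G.Info i j,
          G.YInfo i j β * μ i j h = G.Yh i β h ∧ 0 ≤ μ i j h) ∧
        (∀ (i : Fin G.n) (j : ℕ), j < G.m i →
          (∑ h ∈ G.Info i j, μ i j h = 1) ∧ (∑ a ∈ G.infoA i j, β i j a = 1) ∧
          (∑ a ∈ G.infoA i j, βt i j a = 1)) ∧
        (∀ (i : Fin G.n) (j : ℕ), j < G.m i → ∀ a ∈ G.infoA i j,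
          β i j a * lam i j a = 0 ∧ βt i j a * lamt i j a = 0 ∧
          0 ≤ β i j a ∧ 0 ≤ lam i j a ∧ 0 ≤ βt i j a ∧ 0 ≤ lamt i j a) := by
  constructor
  · intro hSP
    obtain ⟨μ, hμ⟩ := G.exists_belief hβ
    obtain ⟨βt, best, hb⟩ := G.exists_seq_rational hPR β μ
    have hβt : ∀ i, G.IsBehStrategy i (βt i) := by
      intro i j hj
      obtain ⟨h1, h2, -⟩ := hb i j hj
      constructor
      · intro a _
        rw [h2]
        split_ifs <;> norm_num
      · simp only [h2]
        rw [Finset.sum_ite_eq' (G.infoA i j) (best i j) (fun _ => (1 : ℝ)), if_pos h1]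
    let uc : Fin G.n → ℕ → ℕ → ℝ := fun i j a => G.uCond i j a (G.rho i j β βt) μ
    let zet : Fin G.n → ℕ → ℝ := fun i j => uc i j (best i j)
    let lamt : Fin G.n → ℕ → ℕ → ℝ := fun i j a => zet i j - uc i j a
    have hlamt : ∀ (i : Fin G.n) (j : ℕ), j < G.m i → ∀ a ∈ G.infoA i j, 0 ≤ lamt i j a := by
      intro i j hj a ha
      exact sub_nonneg.2 ((hb i j hj).2.2 a ha)
    have hcomp : ∀ (i : Fin G.n) (j : ℕ), j < G.m i → ∀ a ∈ G.infoA i j,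
        βt i j a * lamt i j a = 0 := by
      intro i j hj a ha
      rw [(hb i j hj).2.1 a]
      split_ifs with h
      · simp [lamt, zet, h]
      · simp
    have hzero : ∀ (i : Fin G.n) (j : ℕ), j < G.m i → ∀ a ∈ G.infoA i j,
        β i j a * (G.CInfo i j β * lamt i j a) = 0 := by
      intro i j hj
      obtain ⟨hr1, hr2, hr3⟩ := G.rt_spec i j
      have hd := G.diff_formula hPR (β := β) (βt := βt) (μ := μ) i (fun j hj => (hμ i j hj).1)
        (fun j hj h hh => ((hμ i j hj).2 h hh).1) (β i) hr1
      rw [G.replace_self] at hd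
      have hle := hSP.2 _ hr1 i (βt i) (hβt i)
      have hg : ∀ q < G.m i, ∑ a ∈ G.infoA i q, (βt i q a - β i q a) * uc i q a =
          ∑ a ∈ G.infoA i q, β i q a * lamt i q a := by
        intro q hq
        exact gain_aux _ _ _ _ _ (zet i q) (hβt i q hq).2 (hβ i q hq).2
          (fun a _ => by simp only [lamt]; ring) (hcomp i q hq)
      have hnn : ∀ q < G.m i, 0 ≤ ∑ a ∈ G.infoA i q, β i q a * lamt i q a := fun q hq =>
        Finset.sum_nonneg fun a ha => mul_nonneg ((hβ i q hq).1 a ha) (hlamt i q hq a ha)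
      have hterm : ∀ q ∈ (Finset.range (G.m i)).filter
          (fun q => ∀ h ∈ G.Info i q, G.rt i j <+: h),
          0 ≤ G.reach i q (G.rt i j) β * (G.CInfo i q β *
            ∑ a ∈ G.infoA i q, (βt i q a - β i q a) * uc i q a) := by
        intro q hq
        simp only [Finset.mem_filter, Finset.mem_range] at hq
        rw [hg q hq.1]
        exact mul_nonneg (G.reach_nonneg hβ hq.1 hr1 hq.2)
          (mul_nonneg (G.CInfo_nonneg hβ hq.1) (hnn q hq.1))
      have hs0 := le_antisymm (hd ▸ sub_nonpos.2 hle) (Finset.sum_nonneg hterm)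
      have hj0 := (Finset.sum_eq_zero_iff_of_nonneg hterm).1 hs0 j
        (by simp only [Finset.mem_filter, Finset.mem_range]; exact ⟨hj, hr2⟩)
      have hreach : G.reach i j (G.rt i j) β = 1 := by
        simp [EFG.reach, EFG.prodAlong]
      rw [hreach, one_mul, hg j hj, Finset.mul_sum] at hj0
      intro a ha
      have := (Finset.sum_eq_zero_iff_of_nonneg (fun a ha => mul_nonneg (G.CInfo_nonneg hβ hj)
        (mul_nonneg ((hβ i j hj).1 a ha) (hlamt i j hj a ha)))).1 hj0 a ha
      linarith
    refine ⟨βt, μ, fun i j a => G.CInfo i j β * lamt i j a, lamt,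
      fun i j => G.CInfo i j β * zet i j, zet, ?_, ?_, ?_, ?_, ?_⟩
    · intro i j hj a ha
      simp only [lamt, uc]; ring
    · intro i j hj a ha
      simp only [lamt, uc]; ring
    · intro i j hj
      exact (hμ i j hj).2
    · intro i j hj
      exact ⟨(hμ i j hj).1, (hβ i j hj).2, (hβt i j hj).2⟩
    · intro i j hj a ha
      exact ⟨hzero i j hj a ha, hcomp i j hj a ha, (hβ i j hj).1 a ha,
        mul_nonneg (G.CInfo_nonneg hβ hj) (hlamt i j hj a ha), (hβt i j hj).1 a ha,
        hlamt i j hj a ha⟩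
  · rintro ⟨βt, μ, lam, lamt, ze, zet, h1, h2, h3, h4, h5⟩
    refine ⟨hβ, ?_⟩
    intro r hr i b hbs
    have hd := fun b => G.diff_formula hPR (β := β) (βt := βt) (μ := μ) i
      (fun j hj => (h4 i j hj).1) (fun j hj h hh => (h3 i j hj h hh).1) b hr
    have hg : ∀ b, G.IsBehStrategy i b → ∀ q < G.m i,
        ∑ a ∈ G.infoA i q, (βt i q a - b q a) * G.uCond i q a (G.rho i q β βt) μ =
          ∑ a ∈ G.infoA i q, b q a * lamt i q a := by
      intro b hb q hq
      exact gain_aux _ _ _ _ _ (zet i q) (h4 i q hq).2.2 (hb q hq).2 (h2 i q hq)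
        (fun a ha => (h5 i q hq a ha).2.1)
    have e1 : 0 ≤ G.uExpFrom i (G.replace β i (βt i)) r - G.uExpFrom i (G.replace β i b) r := by
      rw [hd b]
      apply Finset.sum_nonneg
      intro q hq
      simp only [Finset.mem_filter, Finset.mem_range] at hq
      rw [hg b hbs q hq.1]
      have hB := G.replace_beh hβ hbs
      exact mul_nonneg (G.reach_nonneg hB hq.1 hr hq.2) (mul_nonneg (G.CInfo_nonneg hB hq.1)
        (Finset.sum_nonneg fun a ha => mul_nonneg ((hbs q hq.1).1 a ha)
          (h5 i q hq.1 a ha).2.2.2.2.2))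
    have e2 : G.uExpFrom i (G.replace β i (βt i)) r - G.uExpFrom i β r ≤ 0 := by
      have := hd (β i)
      rw [G.replace_self] at this
      rw [this]
      apply Finset.sum_nonpos
      intro q hq
      simp only [Finset.mem_filter, Finset.mem_range] at hq
      apply mul_nonpos_of_nonneg_of_nonpos (G.reach_nonneg hβ hq.1 hr hq.2)
      have hk := gain_aux (G.infoA i q) (β i q) (βt i q)
        (fun a => G.CInfo i q β * G.uCond i q a (G.rho i q β βt) μ) (lam i q) (ze i q)
        (h4 i q hq.1).2.1 (h4 i q hq.1).2.2 (h1 i q hq.1) (fun a ha => (h5 i q hq.1 a ha).1)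
      have hk2 : 0 ≤ ∑ a ∈ G.infoA i q, βt i q a * lam i q a :=
        Finset.sum_nonneg fun a ha => mul_nonneg (h5 i q hq.1 a ha).2.2.2.2.1
          (h5 i q hq.1 a ha).2.2.2.1
      rw [← hk] at hk2
      have hk3 : G.CInfo i q β * ∑ a ∈ G.infoA i q,
          (βt i q a - β i q a) * G.uCond i q a (G.rho i q β βt) μ =
          - ∑ a ∈ G.infoA i q, (β i q a - βt i q a) *
            (G.CInfo i q β * G.uCond i q a (G.rho i q β βt) μ) := by
        rw [Finset.mul_sum, ← Finset.sum_neg_distrib]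
        apply Finset.sum_congr rfl
        intro a _
        ring
      rw [hk3]
      linarith
    linarith
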